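/- arXiv:1807.00160 — 4 statements merged into one kernel-verified Lean document; each statement's English description precedes it below -/
import Mathlib

section
/- For all δ ≥ 0 and A ≥ 0 there exists a constant C = C(δ, A) with the following property. Let Y be a proper geodesic δ-hyperbolic metric space, let ρ₀ be a ray in Y, let h be a horofunction at ρ₀ with constant A, and let φ be an isometry of Y such that φ ∘ ρ₀ is asymptotic to ρ₀ and φ is not hyperbolic. Then |h(y) − h(φ(y))| ≤ C for all y ∈ Y. -/
section HyperbolicGeometry

variable {Y : Type*} [MetricSpace Y]

/-- `s` is a geodesic segment from `x` to `y`: the image of an isometric embedding of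
`[0, dist x y]` sending `0 ↦ x` and `dist x y ↦ y`. -/
def IsGeodesicSegment (s : Set Y) (x y : Y) : Prop :=
  ∃ c : ℝ → Y,
    (∀ t₁ ∈ Set.Icc (0 : ℝ) (dist x y), ∀ t₂ ∈ Set.Icc (0 : ℝ) (dist x y),
      dist (c t₁) (c t₂) = |t₁ - t₂|) ∧
    c 0 = x ∧ c (dist x y) = y ∧ s = c '' Set.Icc (0 : ℝ) (dist x y)

/-- A metric space is geodesic if any two points are connected by a geodesic segment. -/
def IsGeodesicSpace (Y : Type*) [MetricSpace Y] : Prop :=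
  ∀ x y : Y, ∃ s : Set Y, IsGeodesicSegment s x y

/-- `Y` is `δ`-hyperbolic: every geodesic triangle is `δ`-thin, i.e. each side is contained in
the `δ`-neighborhood of the union of the other two sides. -/
def IsDeltaHyperbolic (Y : Type*) [MetricSpace Y] (δ : ℝ) : Prop :=
  ∀ x y z : Y, ∀ sxy syz szx : Set Y,
    IsGeodesicSegment sxy x y → IsGeodesicSegment syz y z → IsGeodesicSegment szx z x →
      (∀ p ∈ sxy, ∃ q ∈ syz ∪ szx, dist p q ≤ δ) ∧
      (∀ p ∈ syz, ∃ q ∈ szx ∪ sxy, dist p q ≤ δ) ∧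
      (∀ p ∈ szx, ∃ q ∈ sxy ∪ syz, dist p q ≤ δ)

/-- A (geodesic) ray in `Y`, parameterized by `[0, ∞)`. -/
def IsRay (ρ : ℝ → Y) : Prop :=
  ∀ s t : ℝ, 0 ≤ s → 0 ≤ t → dist (ρ s) (ρ t) = |s - t|

/-- Two rays are asymptotic if their images are at finite Hausdorff distance. -/
def AsymptoticRays (ρ ρ' : ℝ → Y) : Prop :=
  ∃ D : ℝ, (∀ s : ℝ, 0 ≤ s → ∃ t : ℝ, 0 ≤ t ∧ dist (ρ s) (ρ' t) ≤ D) ∧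
    (∀ t : ℝ, 0 ≤ t → ∃ s : ℝ, 0 ≤ s ∧ dist (ρ s) (ρ' t) ≤ D)

/-- `h` is a horofunction at (the ideal point of) the ray `ρ₀` with constant `A`:
`h` is `1`-Lipschitz and decays with coarse slope `-1` along every ray asymptotic to `ρ₀`. -/
def IsHorofunction (ρ₀ : ℝ → Y) (A : ℝ) (h : Y → ℝ) : Prop :=
  LipschitzWith 1 h ∧
    ∀ ρ : ℝ → Y, IsRay ρ → AsymptoticRays ρ ρ₀ →
      ∀ t₁ t₂ : ℝ, 0 ≤ t₁ → 0 ≤ t₂ → |(h (ρ t₂) - h (ρ t₁)) - (t₁ - t₂)| ≤ A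

/-- An isometry `φ` of `Y` is hyperbolic if some (equivalently, every) orbit map
`ℤ → Y`, `n ↦ φⁿ y`, is a quasi-isometric embedding. -/
def IsHyperbolicIsometry (φ : Y ≃ᵢ Y) : Prop :=
  ∃ y : Y, ∃ L A : ℝ, 0 < L ∧ ∀ m n : ℤ,
    L⁻¹ * |(m : ℝ) - (n : ℝ)| - A ≤ dist ((φ ^ m) y) ((φ ^ n) y) ∧
    dist ((φ ^ m) y) ((φ ^ n) y) ≤ L * |(m : ℝ) - (n : ℝ)| + A

end HyperbolicGeometry

section Helpers

variable {Y : Type*} [MetricSpace Y]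

lemma IsGeodesicSegment.symm' {s : Set Y} {x y : Y} (hs : IsGeodesicSegment s x y) :
    IsGeodesicSegment s y x := by
  obtain ⟨c, hc, h0, h1, rfl⟩ := hs
  refine ⟨fun t => c (dist x y - t), ?_, by simp [h1], by simp [dist_comm y x, h0], ?_⟩
  · intro t₁ h₁ t₂ h₂
    rw [dist_comm y x] at h₁ h₂
    have := hc (dist x y - t₁) ⟨by linarith [h₁.2], by linarith [h₁.1]⟩
      (dist x y - t₂) ⟨by linarith [h₂.2], by linarith [h₂.1]⟩
    rw [this, abs_sub_comm]
    congr 1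
    ring
  · rw [dist_comm y x]
    ext p
    constructor
    · rintro ⟨t, ht, rfl⟩
      exact ⟨dist x y - t, ⟨by linarith [ht.2], by linarith [ht.1]⟩, by simp⟩
    · rintro ⟨t, ht, rfl⟩
      exact ⟨dist x y - t, ⟨by linarith [ht.2], by linarith [ht.1]⟩, rfl⟩

lemma IsGeodesicSegment.dist_left_le {s : Set Y} {x y p : Y} (hs : IsGeodesicSegment s x y)
    (hp : p ∈ s) : dist p x ≤ dist x y := by
  obtain ⟨c, hc, h0, h1, rfl⟩ := hs
  obtain ⟨t, ht, rfl⟩ := hp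
  have := hc t ht 0 ⟨le_rfl, dist_nonneg⟩
  rw [h0, sub_zero, abs_of_nonneg ht.1] at this
  linarith [ht.2]

lemma IsRay.segment {ρ : ℝ → Y} (hρ : IsRay ρ) {T : ℝ} (hT : 0 ≤ T) :
    IsGeodesicSegment (ρ '' Set.Icc 0 T) (ρ 0) (ρ T) := by
  have hd : dist (ρ 0) (ρ T) = T := by
    rw [hρ 0 T le_rfl hT, zero_sub, abs_neg, abs_of_nonneg hT]
  refine ⟨ρ, ?_, rfl, by rw [hd], by rw [hd]⟩
  intro t₁ h₁ t₂ h₂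
  exact hρ _ _ h₁.1 h₂.1

/-- Geodesics from `y` to `ρ₀ T` fellow-travel `ρ₀`. -/
lemma geodesic_fellow {δ : ℝ} (hg : IsGeodesicSpace Y) (hδ : IsDeltaHyperbolic Y δ)
    {ρ₀ : ℝ → Y} (hρ : IsRay ρ₀) (y : Y) {T : ℝ} (hT : 0 ≤ T) {c : ℝ → Y}
    (hc : ∀ t₁ ∈ Set.Icc (0 : ℝ) (dist y (ρ₀ T)), ∀ t₂ ∈ Set.Icc (0 : ℝ) (dist y (ρ₀ T)),
      dist (c t₁) (c t₂) = |t₁ - t₂|) (h0 : c 0 = y) (h1 : c (dist y (ρ₀ T)) = ρ₀ T)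
    {t : ℝ} (ht : t ∈ Set.Icc 0 (dist y (ρ₀ T))) :
    dist (c t) (ρ₀ t) ≤ 2 * δ + 3 * dist y (ρ₀ 0) := by
  obtain ⟨s, hs⟩ := hg (ρ₀ 0) y
  have hseg : IsGeodesicSegment (c '' Set.Icc 0 (dist y (ρ₀ T))) y (ρ₀ T) :=
    ⟨c, hc, h0, h1, rfl⟩
  obtain ⟨q, hq, hqd⟩ := (hδ _ _ _ _ _ _ hseg (hρ.segment hT).symm' hs).1 (c t) ⟨t, ht, rfl⟩
  have key : ∃ u, 0 ≤ u ∧ dist (c t) (ρ₀ u) ≤ δ + dist y (ρ₀ 0) := by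
    rcases hq with hq | hq
    · obtain ⟨u, hu, rfl⟩ := hq
      exact ⟨u, hu.1, by linarith [dist_nonneg (x := y) (y := ρ₀ 0)]⟩
    · have := hs.dist_left_le hq
      rw [dist_comm (ρ₀ 0) y] at this
      exact ⟨0, le_rfl, by linarith [dist_triangle (c t) q (ρ₀ 0)]⟩
  obtain ⟨u, hu, hd⟩ := key
  have e1 : dist y (c t) = t := by
    have := hc 0 ⟨le_rfl, dist_nonneg⟩ t ht
    rwa [h0, zero_sub, abs_neg, abs_of_nonneg ht.1] at this
  have e2 : dist (ρ₀ 0) (ρ₀ u) = u := by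
    rw [hρ 0 u le_rfl hu, zero_sub, abs_neg, abs_of_nonneg hu]
  have e3 : |u - t| ≤ δ + 2 * dist y (ρ₀ 0) := by
    rw [abs_le]
    constructor
    · linarith [dist_triangle4 y (ρ₀ 0) (ρ₀ u) (c t), dist_comm (ρ₀ u) (c t)]
    · linarith [dist_triangle4 (ρ₀ 0) y (c t) (ρ₀ u), dist_comm y (ρ₀ 0)]
  have e4 := hρ u t hu ht.1
  linarith [dist_triangle (c t) (ρ₀ u) (ρ₀ t)]

lemma exists_ray [ProperSpace Y] {δ : ℝ} (hg : IsGeodesicSpace Y) (hδ : IsDeltaHyperbolic Y δ)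
    {ρ₀ : ℝ → Y} (hρ : IsRay ρ₀) (y : Y) :
    ∃ ρ : ℝ → Y, IsRay ρ ∧ ρ 0 = y ∧ ∃ E : ℝ, ∀ t, 0 ≤ t → dist (ρ t) (ρ₀ t) ≤ E := by
  have H : ∀ n : ℕ, ∃ c : ℝ → Y,
    (∀ t₁ ∈ Set.Icc (0 : ℝ) (dist y (ρ₀ n)), ∀ t₂ ∈ Set.Icc (0 : ℝ) (dist y (ρ₀ n)),
      dist (c t₁) (c t₂) = |t₁ - t₂|) ∧ c 0 = y ∧ c (dist y (ρ₀ n)) = ρ₀ n := by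
    intro n
    obtain ⟨s, c, h1, h2, h3, -⟩ := hg y (ρ₀ n)
    exact ⟨c, h1, h2, h3⟩
  choose c hc hc0 hc1 using H
  let U : Ultrafilter ℕ := Filter.hyperfilter ℕ
  have hU : ∀ t : ℝ, ∀ᶠ n : ℕ in (U : Filter ℕ), t ≤ dist y (ρ₀ n) := by
    intro t
    have h1 : ∀ᶠ n : ℕ in Filter.atTop, t ≤ dist y (ρ₀ n) := by
      filter_upwards [Filter.eventually_ge_atTop ⌈t + dist y (ρ₀ 0)⌉₊] with n hn
      have hn' : t + dist y (ρ₀ 0) ≤ n := (Nat.le_ceil _).trans (by exact_mod_cast hn)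
      have e := hρ 0 n le_rfl (Nat.cast_nonneg n)
      rw [zero_sub, abs_neg, abs_of_nonneg (Nat.cast_nonneg n)] at e
      linarith [dist_triangle (ρ₀ 0) y (ρ₀ n), dist_comm y (ρ₀ 0)]
    exact Nat.hyperfilter_le_atTop h1
  have hlim : ∀ t : ℝ, ∃ p : Y, 0 ≤ t → Filter.Tendsto (fun n => c n t) U (nhds p) := by
    intro t
    by_cases ht : 0 ≤ t
    · have hmem : Metric.closedBall y t ∈ U.map (fun n => c n t) := by
        rw [Ultrafilter.mem_map]
        filter_upwards [hU t] with n hn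
        have := hc n t ⟨ht, hn⟩ 0 ⟨le_rfl, dist_nonneg⟩
        rw [hc0, sub_zero, abs_of_nonneg ht] at this
        simp [this]
      obtain ⟨p, -, hp⟩ := (isCompact_closedBall y t).ultrafilter_le_nhds _
        (Filter.le_principal_iff.2 hmem)
      exact ⟨p, fun _ => hp⟩
    · exact ⟨y, fun h => absurd h ht⟩
  choose ρ hlim using hlim
  refine ⟨ρ, ?_, ?_, 2 * δ + 3 * dist y (ρ₀ 0), ?_⟩
  · intro s t hs ht
    refine tendsto_nhds_unique ((hlim s hs).dist (hlim t ht)) ?_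
    refine tendsto_const_nhds.congr' ?_
    filter_upwards [hU s, hU t] with n h1 h2
    exact (hc n s ⟨hs, h1⟩ t ⟨ht, h2⟩).symm
  · refine tendsto_nhds_unique (hlim 0 le_rfl) ?_
    simp only [hc0]
    exact tendsto_const_nhds
  · intro t ht
    refine le_of_tendsto ((hlim t ht).dist tendsto_const_nhds) ?_
    filter_upwards [hU t] with n hn
    exact geodesic_fellow hg hδ hρ y (Nat.cast_nonneg n) (hc n) (hc0 n) (hc1 n) ⟨ht, hn⟩

lemma rays_close {δ : ℝ} (hδ0 : 0 ≤ δ) (hg : IsGeodesicSpace Y) (hδ : IsDeltaHyperbolic Y δ)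
    {ρ ρ' : ℝ → Y} (hρ : IsRay ρ) (hρ' : IsRay ρ') {E : ℝ}
    (hE : ∀ t, 0 ≤ t → dist (ρ t) (ρ' t) ≤ E) :
    ∃ s t, 0 ≤ s ∧ 0 ≤ t ∧ dist (ρ s) (ρ' t) ≤ 2 * δ := by
  have hE0 : 0 ≤ E := dist_nonneg.trans (hE 0 le_rfl)
  let D := dist (ρ 0) (ρ' 0)
  have hD : 0 ≤ D := dist_nonneg
  let s := D + δ + 1
  let T := s + (E + 2 * δ + 1)
  have hs : 0 ≤ s := by positivity
  have hT : 0 ≤ T := by positivity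
  have hsT : s ≤ T := by simp only [T]; linarith
  obtain ⟨g, hgd⟩ := hg (ρ T) (ρ' 0)
  obtain ⟨a, ha⟩ := hg (ρ' 0) (ρ 0)
  obtain ⟨b, hb⟩ := hg (ρ' T) (ρ T)
  have ds : dist (ρ s) (ρ 0) = s := by
    rw [hρ s 0 hs le_rfl, sub_zero, abs_of_nonneg hs]
  have dT : dist (ρ s) (ρ T) = T - s := by
    rw [hρ s T hs hT, abs_sub_comm, abs_of_nonneg (by linarith)]
  have hTs : T - s = E + 2 * δ + 1 := by simp only [T]; ring
  have hsD : s = D + δ + 1 := rfl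
  obtain ⟨q, hq, hqd⟩ := (hδ _ _ _ _ _ _ (hρ.segment hT) hgd ha).1 (ρ s) ⟨s, ⟨hs, hsT⟩, rfl⟩
  rcases hq with hq | hq
  · obtain ⟨r, hr, hrd⟩ := (hδ _ _ _ _ _ _ hgd (hρ'.segment hT) hb).1 q hq
    rcases hr with ⟨t, ht, rfl⟩ | hr
    · exact ⟨s, t, hs, ht.1, by linarith [dist_triangle (ρ s) q (ρ' t)]⟩
    · exfalso
      have h1 := hb.symm'.dist_left_le hr
      linarith [hE T hT, dist_triangle4 (ρ s) q r (ρ T)]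
  · exfalso
    have h1 : dist q (ρ 0) ≤ D := ha.symm'.dist_left_le hq
    linarith [dist_triangle (ρ s) q (ρ 0)]

lemma asymptotic_of_bound {ρ ρ' : ℝ → Y} {E : ℝ}
    (hE : ∀ t, 0 ≤ t → dist (ρ t) (ρ' t) ≤ E) : AsymptoticRays ρ ρ' :=
  ⟨E, fun s hs => ⟨s, hs, hE s hs⟩, fun s hs => ⟨s, hs, hE s hs⟩⟩

lemma AsymptoticRays.trans' {ρ ρ' ρ'' : ℝ → Y} (h : AsymptoticRays ρ ρ')
    (h' : AsymptoticRays ρ' ρ'') : AsymptoticRays ρ ρ'' := by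
  obtain ⟨D, h1, h2⟩ := h
  obtain ⟨D', h1', h2'⟩ := h'
  refine ⟨D + D', fun s hs => ?_, fun t ht => ?_⟩
  · obtain ⟨t, ht, e⟩ := h1 s hs
    obtain ⟨u, hu, e'⟩ := h1' t ht
    exact ⟨u, hu, by linarith [dist_triangle (ρ s) (ρ' t) (ρ'' u)]⟩
  · obtain ⟨u, hu, e⟩ := h2' t ht
    obtain ⟨s, hs, e'⟩ := h2 u hu
    exact ⟨s, hs, by linarith [dist_triangle (ρ s) (ρ' u) (ρ'' t)]⟩

lemma IsHorofunction.comp {ρ₀ : ℝ → Y} {A : ℝ} {h : Y → ℝ} (hh : IsHorofunction ρ₀ A h)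
    (φ : Y ≃ᵢ Y) (hφ : AsymptoticRays (fun t => φ (ρ₀ t)) ρ₀) :
    IsHorofunction ρ₀ A (fun y => h (φ y)) := by
  refine ⟨?_, fun ρ hρ has => hh.2 (fun t => φ (ρ t)) ?_ ?_⟩
  · have := hh.1.comp φ.isometry.lipschitz
    rw [one_mul] at this
    exact this
  · intro s t hs ht
    rw [φ.dist_eq]
    exact hρ s t hs ht
  · refine AsymptoticRays.trans' ?_ hφ
    obtain ⟨D, h1, h2⟩ := has
    exact ⟨D, by simpa only [φ.dist_eq] using h1, by simpa only [φ.dist_eq] using h2⟩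

lemma horofunction_diff [ProperSpace Y] {δ : ℝ} (hδ0 : 0 ≤ δ) (hg : IsGeodesicSpace Y)
    (hδ : IsDeltaHyperbolic Y δ) {ρ₀ : ℝ → Y} (hρ : IsRay ρ₀) (A : ℝ) (y y' : Y) :
    ∃ r : ℝ, ∀ h, IsHorofunction ρ₀ A h → |h y - h y' - r| ≤ 2 * A + 2 * δ := by
  obtain ⟨ρ, h1, h2, E, hE⟩ := exists_ray hg hδ hρ y
  obtain ⟨ρ', h1', h2', E', hE'⟩ := exists_ray hg hδ hρ y'
  obtain ⟨s, t, hs, ht, hst⟩ := rays_close hδ0 hg hδ h1 h1' (E := E + E') (fun t ht => by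
    linarith [dist_triangle (ρ t) (ρ₀ t) (ρ' t), dist_comm (ρ₀ t) (ρ' t), hE t ht, hE' t ht])
  refine ⟨s - t, fun h hh => ?_⟩
  have a := hh.2 ρ h1 (asymptotic_of_bound hE) 0 s le_rfl hs
  have b := hh.2 ρ' h1' (asymptotic_of_bound hE') 0 t le_rfl ht
  have c := hh.1.dist_le_mul (ρ s) (ρ' t)
  rw [Real.dist_eq, NNReal.coe_one, one_mul] at c
  rw [h2] at a
  rw [h2'] at b
  have c' := c.trans hst
  rw [abs_le] at *
  constructor <;> linarith [a.1, a.2, b.1, b.2, c'.1, c'.2]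

lemma hyperbolic_of_drift {h : Y → ℝ} (hh : LipschitzWith 1 h) (φ : Y ≃ᵢ Y) (y : Y) {ε σ : ℝ}
    (hε : 0 < ε) (hσ : |σ| = 1) (hd : ∀ z, ε ≤ σ * (h (φ z) - h z)) :
    IsHyperbolicIsometry φ := by
  have step : ∀ (k : ℕ) (z : Y), ε * k ≤ σ * (h ((φ ^ k) z) - h z) ∧
      dist ((φ ^ k) z) z ≤ k * dist (φ z) z := by
    intro k z
    induction k with
    | zero => simp
    | succ k ih =>
      have e : (φ ^ (k + 1)) z = φ ((φ ^ k) z) := by rw [pow_succ']; rfl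
      have e2 : (φ ^ (k + 1)) z = (φ ^ k) (φ z) := by rw [pow_succ]; rfl
      constructor
      · rw [e]
        push_cast
        linarith [hd ((φ ^ k) z), ih.1]
      · rw [e2]
        push_cast
        have := (φ ^ k).dist_eq (φ z) z
        linarith [dist_triangle ((φ ^ k) (φ z)) ((φ ^ k) z) z, ih.2]
  have low : ∀ (k : ℕ) (z : Y), ε * k ≤ dist ((φ ^ k) z) z := by
    intro k z
    have c := hh.dist_le_mul ((φ ^ k) z) z
    rw [Real.dist_eq, NNReal.coe_one, one_mul] at c
    have := le_abs_self (σ * (h ((φ ^ k) z) - h z))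
    rw [abs_mul, hσ, one_mul] at this
    linarith [(step k z).1]
  have eqd : ∀ (m : ℤ) (k : ℕ), dist ((φ ^ (m + k)) y) ((φ ^ m) y) = dist ((φ ^ k) y) y := by
    intro m k
    have e : (φ ^ (m + k)) y = (φ ^ m) ((φ ^ k) y) := by rw [zpow_add, zpow_natCast]; rfl
    rw [e]
    exact (φ ^ m).dist_eq _ _
  have main : ∀ m n : ℤ, ε * |(m : ℝ) - n| ≤ dist ((φ ^ m) y) ((φ ^ n) y) ∧
      dist ((φ ^ m) y) ((φ ^ n) y) ≤ |(m : ℝ) - n| * dist (φ y) y := by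
    intro m n
    rcases le_total n m with hmn | hmn
    · obtain ⟨k, rfl⟩ := Int.le.dest hmn
      rw [eqd]
      have : |((n + k : ℤ) : ℝ) - n| = k := by simp
      rw [this]
      exact ⟨low k y, (step k y).2⟩
    · obtain ⟨k, rfl⟩ := Int.le.dest hmn
      rw [dist_comm, eqd]
      have : |(m : ℝ) - (m + k : ℤ)| = k := by simp
      rw [this]
      exact ⟨low k y, (step k y).2⟩
  have hL : 0 < ε⁻¹ + dist (φ y) y := by positivity
  refine ⟨y, ε⁻¹ + dist (φ y) y, 0, hL, fun m n => ⟨?_, ?_⟩⟩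
  · have h1 : (ε⁻¹ + dist (φ y) y)⁻¹ ≤ ε := by
      rw [inv_le_comm₀ hL hε]
      linarith [dist_nonneg (x := φ y) (y := y)]
    have := mul_le_mul_of_nonneg_right h1 (abs_nonneg ((m : ℝ) - n))
    linarith [(main m n).1]
  · have := mul_nonneg (inv_pos.2 hε).le (abs_nonneg ((m : ℝ) - n))
    linarith [(main m n).2]

end Helpers

/-- For all `δ ≥ 0` and `A ≥ 0` there is `C = C(δ, A)`: if `Y` is a proper geodesic
`δ`-hyperbolic space, `h` a horofunction at a ray `ρ₀` with constant `A`, and `φ` an isometry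
of `Y` fixing the ideal point of `ρ₀` (i.e. `φ ∘ ρ₀` is asymptotic to `ρ₀`) which is not
hyperbolic, then `|h(y) − h(φ y)| ≤ C` for all `y ∈ Y`. -/
theorem nonhyperbolic_isometry_coarsely_preserves_horofunction :
    ∀ δ A : ℝ, 0 ≤ δ → 0 ≤ A → ∃ C : ℝ,
      ∀ (Y : Type*) [MetricSpace Y], ∀ (_ : ProperSpace Y),
        IsGeodesicSpace Y → IsDeltaHyperbolic Y δ →
        ∀ ρ₀ : ℝ → Y, IsRay ρ₀ →
        ∀ h : Y → ℝ, IsHorofunction ρ₀ A h →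
        ∀ φ : Y ≃ᵢ Y, AsymptoticRays (fun t => φ (ρ₀ t)) ρ₀ → ¬ IsHyperbolicIsometry φ →
        ∀ y : Y, |h y - h (φ y)| ≤ C := by
  intro δ A hδ0 hA
  refine ⟨4 * A + 4 * δ, ?_⟩
  intro Y _ _ hg hδ ρ₀ hρ h hh φ hφ hnh y
  by_contra hcon
  push Not at hcon
  apply hnh
  have key : ∀ z, |(h (φ z) - h z) - (h (φ y) - h y)| ≤ 4 * A + 4 * δ := by
    intro z
    obtain ⟨r, hr⟩ := horofunction_diff hδ0 hg hδ hρ A z y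
    have a := hr h hh
    have b := hr _ (hh.comp φ hφ)
    rw [abs_le] at *
    constructor <;> linarith [a.1, a.2, b.1, b.2]
  rcases lt_abs.1 hcon with hc | hc
  · refine hyperbolic_of_drift hh.1 φ y (ε := h y - h (φ y) - (4 * A + 4 * δ)) (σ := -1)
      (by linarith) (by simp) (fun z => ?_)
    linarith [(abs_le.1 (key z)).2]
  · refine hyperbolic_of_drift hh.1 φ y (ε := h (φ y) - h y - (4 * A + 4 * δ)) (σ := 1)
      (by linarith) (by simp) (fun z => ?_)
    linarith [(abs_le.1 (key z)).1]
end

section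
/- For all δ ≥ 0 and A ≥ 0 there exists a constant C = C(δ, A) with the following property. Let Y be a proper geodesic δ-hyperbolic metric space, let ρ₀ be a ray in Y, and let h and h' be two horofunctions at ρ₀ with constant A. Then |(h(y) − h(y')) − (h'(y) − h'(y'))| ≤ C for all y, y' ∈ Y; that is, any two horofunctions at the same ideal point coarsely differ by an additive constant. -/
open Filter Topology in
lemma exists_asymptotic_ray {Y : Type*} [MetricSpace Y] [ProperSpace Y] {δ : ℝ} (hδ : 0 ≤ δ)
    (hg : IsGeodesicSpace Y) (hh : IsDeltaHyperbolic Y δ) (ρ₀ : ℝ → Y) (hρ₀ : IsRay ρ₀) (y : Y) :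
    ∃ ρ : ℝ → Y, IsRay ρ ∧ ρ 0 = y ∧ AsymptoticRays ρ ρ₀ ∧
      ∀ s : ℝ, dist y (ρ₀ 0) + δ < s → ∃ t : ℝ, 0 ≤ t ∧ dist (ρ t) (ρ₀ s) ≤ δ + 2 := by
  set D := dist y (ρ₀ 0) with hD
  have hD0 : 0 ≤ D := dist_nonneg
  have key : ∀ n : ℕ, ∃ c : ℝ → Y,
      (∀ t₁ ∈ Set.Icc (0 : ℝ) (dist y (ρ₀ n)), ∀ t₂ ∈ Set.Icc (0 : ℝ) (dist y (ρ₀ n)),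
        dist (c t₁) (c t₂) = |t₁ - t₂|) ∧ c 0 = y ∧
      (∀ t ∈ Set.Icc (0 : ℝ) (dist y (ρ₀ n)), ∃ s, 0 ≤ s ∧ dist (c t) (ρ₀ s) ≤ δ + D) ∧
      (∀ s, D + δ < s → s ≤ n → ∃ t ∈ Set.Icc (0 : ℝ) (dist y (ρ₀ n)),
        dist (c t) (ρ₀ s) ≤ δ) := by
    intro n
    have hn : (0 : ℝ) ≤ n := Nat.cast_nonneg n
    obtain ⟨sxy, hsxy⟩ := hg y (ρ₀ n)
    obtain ⟨szx, hszx⟩ := hg (ρ₀ 0) y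
    have hd : dist (ρ₀ n) (ρ₀ 0) = n := by
      rw [hρ₀ n 0 hn le_rfl, sub_zero, abs_of_nonneg hn]
    have hsyz : IsGeodesicSegment ((fun t => ρ₀ (n - t)) '' Set.Icc (0 : ℝ) n)
        (ρ₀ n) (ρ₀ 0) := by
      refine ⟨fun t => ρ₀ (n - t), ?_, by simp, by simp [hd], by rw [hd]⟩
      rw [hd]
      intro t₁ h₁ t₂ h₂
      rw [hρ₀ _ _ (by linarith [h₁.2]) (by linarith [h₂.2]), abs_sub_comm]
      congr 1
      ring
    obtain ⟨H1, H2, -⟩ := hh _ _ _ _ _ _ hsxy hsyz hszx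
    obtain ⟨c, hc, hc0, -, hcs⟩ := hsxy
    obtain ⟨e, he, he0, -, hes⟩ := hszx
    have hszxD : ∀ q ∈ szx, dist q (ρ₀ 0) ≤ D := by
      intro q hq
      rw [hes] at hq
      obtain ⟨t, ht, rfl⟩ := hq
      rw [← he0, he t ht 0 ⟨le_rfl, dist_nonneg⟩, sub_zero, abs_of_nonneg ht.1, hD, dist_comm y]
      exact ht.2
    refine ⟨c, hc, hc0, ?_, ?_⟩
    · intro t ht
      obtain ⟨q, hq | hq, hqd⟩ := H1 (c t) (by rw [hcs]; exact ⟨t, ht, rfl⟩)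
      · obtain ⟨u, hu, rfl⟩ := hq
        exact ⟨n - u, by linarith [hu.2], by dsimp only at hqd; linarith⟩
      · exact ⟨0, le_rfl, by linarith [dist_triangle (c t) q (ρ₀ 0), hszxD q hq]⟩
    · intro s hs hsn
      obtain ⟨q, hq | hq, hqd⟩ := H2 (ρ₀ s) ⟨n - s, ⟨by linarith, by linarith⟩, by simp⟩
      · have h1 := dist_triangle (ρ₀ s) q (ρ₀ 0)
        rw [hρ₀ s 0 (by linarith) le_rfl, sub_zero, abs_of_nonneg (by linarith)] at h1
        linarith [hszxD q hq]
      · rw [hcs] at hq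
        obtain ⟨t, ht, rfl⟩ := hq
        exact ⟨t, ht, by rw [dist_comm]; exact hqd⟩
  choose c hc hc0 hcA hcB using key
  have hlen : ∀ n : ℕ, (n : ℝ) - D ≤ dist y (ρ₀ n) := by
    intro n
    have h1 := dist_triangle (ρ₀ n) y (ρ₀ 0)
    rw [hρ₀ n 0 (Nat.cast_nonneg n) le_rfl, sub_zero, abs_of_nonneg (Nat.cast_nonneg n),
      dist_comm _ y] at h1
    linarith
  set U : Ultrafilter ℕ := Ultrafilter.of atTop with hU
  have hUle : (U : Filter ℕ) ≤ atTop := Ultrafilter.of_le atTop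
  have hbig : ∀ r : ℝ, ∀ᶠ n : ℕ in (U : Filter ℕ), r ≤ (n : ℝ) := fun r =>
    hUle (tendsto_natCast_atTop_atTop.eventually_ge_atTop r)
  have hmem : ∀ t : ℝ, 0 ≤ t → ∀ᶠ n : ℕ in (U : Filter ℕ), t ∈ Set.Icc (0 : ℝ) (dist y (ρ₀ n)) := by
    intro t ht
    filter_upwards [hbig (t + D)] with n hn
    exact ⟨ht, by linarith [hlen n]⟩
  have hlim : ∀ t : ℝ, ∃ p : Y, 0 ≤ t → Tendsto (fun n => c n t) U (𝓝 p) := by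
    intro t
    by_cases ht : 0 ≤ t
    · have hb : ((U.map (fun n => c n t) : Ultrafilter Y) : Filter Y)
          ≤ 𝓟 (Metric.closedBall y t) := by
        rw [le_principal_iff]
        change ∀ᶠ n : ℕ in (U : Filter ℕ), c n t ∈ Metric.closedBall y t
        filter_upwards [hmem t ht] with n hn
        have := hc n t hn 0 ⟨le_rfl, dist_nonneg⟩
        rw [hc0, sub_zero, abs_of_nonneg ht] at this
        exact this.le
      obtain ⟨p, -, hp⟩ := (isCompact_closedBall y t).ultrafilter_le_nhds _ hb
      exact ⟨p, fun _ => hp⟩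
    · exact ⟨y, fun h => absurd h ht⟩
  choose ρ hρ using hlim
  have hnear : ∀ t : ℝ, 0 ≤ t → ∀ᶠ n : ℕ in (U : Filter ℕ), dist (c n t) (ρ t) < 1 := fun t ht =>
    (hρ t ht).eventually (Metric.ball_mem_nhds _ one_pos)
  have hray : IsRay ρ := by
    intro s t hs ht
    refine tendsto_nhds_unique ((hρ s hs).dist (hρ t ht)) (tendsto_const_nhds.congr' ?_)
    filter_upwards [hmem s hs, hmem t ht] with n h1 h2
    exact (hc n s h1 t h2).symm
  have hzero : ρ 0 = y := by
    refine tendsto_nhds_unique (hρ 0 le_rfl) ?_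
    simp only [hc0]
    exact tendsto_const_nhds
  have hclose : ∀ s : ℝ, D + δ < s → ∃ t : ℝ, 0 ≤ t ∧ dist (ρ t) (ρ₀ s) ≤ δ + 2 := by
    intro s hs
    have : ∀ n : ℕ, ∃ t : ℝ, s ≤ n → t ∈ Set.Icc (0 : ℝ) (dist y (ρ₀ n)) ∧
        dist (c n t) (ρ₀ s) ≤ δ := by
      intro n
      by_cases h : s ≤ n
      · obtain ⟨t, h1, h2⟩ := hcB n s hs h
        exact ⟨t, fun _ => ⟨h1, h2⟩⟩
      · exact ⟨0, fun h' => absurd h' h⟩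
    choose τ hτ using this
    have hb : ((U.map τ : Ultrafilter ℝ) : Filter ℝ) ≤ 𝓟 (Set.Icc 0 (s + D + δ)) := by
      rw [le_principal_iff]
      change ∀ᶠ n : ℕ in (U : Filter ℕ), τ n ∈ Set.Icc 0 (s + D + δ)
      filter_upwards [hbig s] with n hn
      obtain ⟨h1, h2⟩ := hτ n hn
      refine ⟨h1.1, ?_⟩
      have h3 := hc n _ h1 0 ⟨le_rfl, dist_nonneg⟩
      rw [hc0, sub_zero, abs_of_nonneg h1.1] at h3
      have h4 := dist_triangle4 (c n (τ n)) (ρ₀ s) (ρ₀ 0) y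
      rw [hρ₀ s 0 (by linarith) le_rfl, sub_zero, abs_of_nonneg (by linarith),
        dist_comm (ρ₀ 0) y] at h4
      linarith
    obtain ⟨t, ht, hlt⟩ := isCompact_Icc.ultrafilter_le_nhds _ hb
    have hlt' : Tendsto τ U (𝓝 t) := hlt
    have hev : ∀ᶠ n : ℕ in (U : Filter ℕ), dist (τ n) t < 1 :=
      hlt'.eventually (Metric.ball_mem_nhds _ one_pos)
    obtain ⟨n, h1, h2, h3, h4⟩ :=
      (hev.and ((hnear t ht.1).and ((hmem t ht.1).and (hbig s)))).exists
    obtain ⟨h5, h6⟩ := hτ n h4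
    refine ⟨t, ht.1, ?_⟩
    have h7 := hc n t h3 _ h5
    rw [dist_comm, Real.dist_eq] at h1
    have h8 := dist_triangle4 (ρ t) (c n t) (c n (τ n)) (ρ₀ s)
    rw [dist_comm (ρ t) (c n t)] at h8
    linarith
  refine ⟨ρ, hray, hzero, ⟨2 * D + 2 * δ + 2, ?_, ?_⟩, hclose⟩
  · intro t ht
    obtain ⟨n, h1, h2⟩ := ((hnear t ht).and (hmem t ht)).exists
    obtain ⟨s, hs, h3⟩ := hcA n t h2
    refine ⟨s, hs, ?_⟩
    linarith [dist_triangle_left (ρ t) (ρ₀ s) (c n t)]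
  · intro s hs
    by_cases h : D + δ < s
    · obtain ⟨t, ht, h1⟩ := hclose s h
      exact ⟨t, ht, by linarith⟩
    · refine ⟨0, le_rfl, ?_⟩
      rw [hzero]
      have h1 := dist_triangle y (ρ₀ 0) (ρ₀ s)
      rw [hρ₀ 0 s le_rfl hs, zero_sub, abs_neg, abs_of_nonneg hs] at h1
      linarith

lemma horofunction_estimate {Y : Type*} [MetricSpace Y] {A K : ℝ} {ρ₀ ρ : ℝ → Y} {h : Y → ℝ}
    (hh : IsHorofunction ρ₀ A h) (hρ : IsRay ρ) (ha : AsymptoticRays ρ ρ₀) {s t : ℝ}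
    (ht : 0 ≤ t) (hd : dist (ρ t) (ρ₀ s) ≤ K) :
    |h (ρ 0) - h (ρ₀ s) - t| ≤ A + K := by
  have h1 := hh.2 ρ hρ ha 0 t le_rfl ht
  have h2 := hh.1.dist_le_mul (ρ t) (ρ₀ s)
  rw [Real.dist_eq, NNReal.coe_one, one_mul] at h2
  have h3 := h2.trans hd
  rw [abs_le] at *
  constructor <;> linarith [h1.1, h1.2, h3.1, h3.2]

/-- For all `δ ≥ 0` and `A ≥ 0` there is `C = C(δ, A)`: if `Y` is a proper geodesic
`δ`-hyperbolic space and `h, h'` are two horofunctions at the same ray `ρ₀` with constant `A`,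
then `|(h(y) − h(y')) − (h'(y) − h'(y'))| ≤ C` for all `y, y' ∈ Y`; i.e. any two horofunctions
at the same ideal point coarsely differ by an additive constant. -/
theorem horofunctions_coarsely_differ_by_constant :
    ∀ δ A : ℝ, 0 ≤ δ → 0 ≤ A → ∃ C : ℝ,
      ∀ (Y : Type*) [MetricSpace Y], ∀ (_ : ProperSpace Y),
        IsGeodesicSpace Y → IsDeltaHyperbolic Y δ →
        ∀ ρ₀ : ℝ → Y, IsRay ρ₀ →
        ∀ h h' : Y → ℝ, IsHorofunction ρ₀ A h → IsHorofunction ρ₀ A h' →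
        ∀ y y' : Y, |(h y - h y') - (h' y - h' y')| ≤ C := by
  intro δ A hδ hA
  refine ⟨4 * (A + (δ + 2)), ?_⟩
  intro Y _ _ hg hhyp ρ₀ hρ₀ h h' hh hh' y y'
  obtain ⟨ρ, hr, h0, ha, hc⟩ := exists_asymptotic_ray hδ hg hhyp ρ₀ hρ₀ y
  obtain ⟨ρ', hr', h0', ha', hc'⟩ := exists_asymptotic_ray hδ hg hhyp ρ₀ hρ₀ y'
  set s := max (dist y (ρ₀ 0) + δ) (dist y' (ρ₀ 0) + δ) + 1 with hs
  obtain ⟨t, ht, hd⟩ := hc s (by linarith [le_max_left (dist y (ρ₀ 0) + δ) (dist y' (ρ₀ 0) + δ)])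
  obtain ⟨t', ht', hd'⟩ := hc' s
    (by linarith [le_max_right (dist y (ρ₀ 0) + δ) (dist y' (ρ₀ 0) + δ)])
  have e1 := horofunction_estimate hh hr ha ht hd
  have e2 := horofunction_estimate hh hr' ha' ht' hd'
  have e3 := horofunction_estimate hh' hr ha ht hd
  have e4 := horofunction_estimate hh' hr' ha' ht' hd'
  rw [h0, abs_le] at e1 e3
  rw [h0', abs_le] at e2 e4
  rw [abs_le]
  constructor <;> linarith [e1.1, e1.2, e2.1, e2.2, e3.1, e3.2, e4.1, e4.2]
end

section
/- Let I ⊆ ℝ be an interval, let f : I → ℝ, let ε ≥ 0, and suppose there exists t₀ ∈ I such that f restricted to I ∩ (−∞, t₀] has ε-coarse slope −1 and f restricted to I ∩ [t₀, +∞) has ε-coarse slope +1. Then f is 2ε-coarsely convex: f(μ₁t₁ + μ₂t₂) ≤ μ₁f(t₁) + μ₂f(t₂) + 2ε for all t₁, t₂ ∈ I and all μ₁, μ₂ ≥ 0 with μ₁ + μ₂ = 1. -/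
/-- If `f : I → ℝ` on an interval `I` has `ε`-coarse slope `-1` on `I ∩ (-∞, t₀]` and
`ε`-coarse slope `+1` on `I ∩ [t₀, ∞)` for some `t₀ ∈ I`, then `f` is `2ε`-coarsely convex. -/
theorem coarselyConvex_of_coarse_slopes
    (I : Set ℝ) (hI : I.OrdConnected) (f : ℝ → ℝ) (ε : ℝ) (hε : 0 ≤ ε)
    (t₀ : ℝ) (ht₀ : t₀ ∈ I)
    (hleft : ∀ t₁ ∈ I, ∀ t₂ ∈ I, t₁ ≤ t₀ → t₂ ≤ t₀ →
      |f t₁ - f t₂ - (-1) * (t₁ - t₂)| ≤ ε)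
    (hright : ∀ t₁ ∈ I, ∀ t₂ ∈ I, t₀ ≤ t₁ → t₀ ≤ t₂ →
      |f t₁ - f t₂ - 1 * (t₁ - t₂)| ≤ ε) :
    ∀ t₁ ∈ I, ∀ t₂ ∈ I, ∀ μ₁ μ₂ : ℝ, 0 ≤ μ₁ → 0 ≤ μ₂ → μ₁ + μ₂ = 1 →
      f (μ₁ * t₁ + μ₂ * t₂) ≤ μ₁ * f t₁ + μ₂ * f t₂ + 2 * ε := by
  intro t₁ h₁ t₂ h₂ μ₁ μ₂ hμ₁ hμ₂ hμ
  -- `f` is within `ε` of the convex function `t ↦ f t₀ + |t - t₀|`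
  have key : ∀ t ∈ I, |f t - f t₀ - abs (t - t₀)| ≤ ε := by
    intro t ht
    rcases le_total t t₀ with h | h
    · have h3 := hleft t ht t₀ ht₀ h le_rfl
      rw [abs_of_nonpos (sub_nonpos.2 h)]
      simpa using h3
    · have h3 := hright t ht t₀ ht₀ h le_rfl
      rw [abs_of_nonneg (sub_nonneg.2 h)]
      simpa using h3
  have hx : μ₁ * t₁ + μ₂ * t₂ ∈ I := by
    have hc : Convex ℝ I := hI.convex
    simpa using hc h₁ h₂ hμ₁ hμ₂ hμ
  have hconv : |μ₁ * t₁ + μ₂ * t₂ - t₀| ≤ μ₁ * |t₁ - t₀| + μ₂ * |t₂ - t₀| := by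
    have e : μ₁ * t₁ + μ₂ * t₂ - t₀ = μ₁ * (t₁ - t₀) + μ₂ * (t₂ - t₀) := by
      linear_combination t₀ * hμ
    rw [e]
    refine (abs_add_le _ _).trans ?_
    rw [abs_mul, abs_mul, abs_of_nonneg hμ₁, abs_of_nonneg hμ₂]
  have k := (abs_le.1 (key _ hx)).2
  have k₁ := mul_le_mul_of_nonneg_left (abs_le.1 (key _ h₁)).1 hμ₁
  have k₂ := mul_le_mul_of_nonneg_left (abs_le.1 (key _ h₂)).1 hμ₂
  have e₂ : μ₂ = 1 - μ₁ := by linarith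
  subst e₂
  linarith
end

section
/- For every δ ≥ 0 and D ≥ 0 there exists D' = D'(δ, D) with the following property. Let Y be a proper geodesic δ-hyperbolic metric space and let q : H → Y be a D-straight holey line, where H ⊆ ℝ. Then there exist an interval I ⊆ ℝ, a geodesic c : I → Y (an isometric embedding), and a nondecreasing map m : H → I such that d(q(h), c(m(h))) ≤ D' for all h ∈ H. -/
section StraightHoleyLines

variable {Y : Type*} [MetricSpace Y]

/-- A triple `(x, y, z)` in `Y` is `D`-straight if there are points `x', y', z'` lying in this
order on a geodesic segment with `dist x x' ≤ D`, `dist y y' ≤ D`, `dist z z' ≤ D`. -/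
def IsStraightTriple (D : ℝ) (x y z : Y) : Prop :=
  ∃ x' y' z' : Y, (∃ s : Set Y, IsGeodesicSegment s x' z' ∧ y' ∈ s) ∧
    dist x x' ≤ D ∧ dist y y' ≤ D ∧ dist z z' ≤ D

/-- A holey line `q : H → Y`, `H ⊆ ℝ`, is `D`-straight if all triples in its image
(in the correct order) are `D`-straight. -/
def IsStraightHoleyLine (D : ℝ) (H : Set ℝ) (q : ℝ → Y) : Prop :=
  ∀ hm ∈ H, ∀ h ∈ H, ∀ hp ∈ H, hm ≤ h → h ≤ hp →
    IsStraightTriple D (q hm) (q h) (q hp)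

end StraightHoleyLines

/-- Limits along an ultrafilter of bounded families in a proper space. -/
theorem ultralimit_exists {ι Z : Type*} [PseudoMetricSpace Z] [ProperSpace Z] (U : Ultrafilter ι)
    (f : ι → Z) (z₀ : Z) (r : ℝ) (h : ∀ᶠ i in (U : Filter ι), dist (f i) z₀ ≤ r) :
    ∃ z, Filter.Tendsto f (U : Filter ι) (nhds z) := by
  obtain ⟨z, -, hz⟩ := (isCompact_closedBall z₀ r).ultrafilter_le_nhds (U.map f)
    (by
      rw [Filter.le_principal_iff]
      exact h)
  exact ⟨z, hz⟩

theorem clamp_sub_le (L s t : ℝ) :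
    |max 0 (min L s) - max 0 (min L t)| ≤ |s - t| := by
  have h1 := abs_max_sub_max_le_max 0 (min L s) 0 (min L t)
  have h2 := abs_min_sub_min_le_max L s L t
  simp only [sub_self, abs_zero, abs_nonneg, max_eq_right] at h1 h2
  exact h1.trans h2

/-- The bounded version of the theorem. -/
theorem straight_bounded {Y : Type*} [MetricSpace Y] {δ D : ℝ} (hδ : 0 ≤ δ) (hD : 0 ≤ D)
    (hg : IsGeodesicSpace Y) (hh : IsDeltaHyperbolic Y δ) (H : Set ℝ) (q : ℝ → Y)
    (hq : IsStraightHoleyLine D H q) (a b h₀ : ℝ) (ha : a ∈ H) (hb : b ∈ H) (hh₀ : h₀ ∈ H)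
    (hah : a ≤ h₀) (hhb : h₀ ≤ b) :
    ∃ (c : ℝ → Y) (e m : ℝ → ℝ), (∀ s t, dist (c s) (c t) = |e s - e t|) ∧
      (∀ s t, |e s - e t| ≤ |s - t|) ∧ e 0 = 0 ∧ m h₀ = 0 ∧
      ∀ h ∈ H, a ≤ h → h ≤ b → e (m h) = m h ∧ dist (q h) (c (m h)) ≤ 6 * δ + 12 * D ∧
        ∀ k ∈ H, h ≤ k → k ≤ b → m h ≤ m k := by
  obtain ⟨S, hS⟩ := hg (q a) (q b)
  have hS' := hS
  obtain ⟨γ, hγ, hγ0, hγ1, hSγ⟩ := hS'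
  set L := dist (q a) (q b) with hL
  have hL0 : 0 ≤ L := dist_nonneg
  have near : ∀ h ∈ H, a ≤ h → h ≤ b →
      ∃ t ∈ Set.Icc 0 L, dist (q h) (γ t) ≤ 2 * δ + 2 * D := by
    intro h hH h1 h2
    obtain ⟨x', y', z', ⟨s, hs, hys⟩, hx, hy, hz⟩ := hq a ha h hH b hb h1 h2
    obtain ⟨s1, hs1⟩ := hg z' (q a)
    obtain ⟨s2, hs2⟩ := hg (q a) x'
    obtain ⟨s3, hs3⟩ := hg (q b) z'
    obtain ⟨p, hp, hyp⟩ := (hh x' z' (q a) s s1 s2 hs hs1 hs2).1 y' hys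
    have hshort : ∀ (u v : Y) (r : Set Y), IsGeodesicSegment r u v → ∀ w ∈ r,
        dist w u ≤ dist u v := by
      rintro u v r ⟨g, hg1, hg2, hg3, rfl⟩ w ⟨t, ht, rfl⟩
      have h0 : (0:ℝ) ∈ Set.Icc 0 (dist u v) := ⟨le_refl _, dist_nonneg⟩
      have := hg1 t ht 0 h0
      rw [hg2, sub_zero, abs_of_nonneg ht.1] at this
      rw [this]; exact ht.2
    have t1 := dist_triangle (q h) y' p
    rcases hp with hp | hp
    · obtain ⟨w, hw, hpw⟩ := (hh z' (q a) (q b) s1 S s3 hs1 hS hs3).1 p hp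
      have t2 := dist_triangle (q h) p w
      rcases hw with hw | hw
      · rw [hSγ] at hw
        obtain ⟨t, ht, rfl⟩ := hw
        exact ⟨t, ht, by linarith⟩
      · refine ⟨L, ⟨hL0, le_refl _⟩, ?_⟩
        rw [hγ1]
        have := hshort _ _ _ hs3 w hw
        have t3 := dist_triangle (q h) w (q b)
        linarith
    · refine ⟨0, ⟨le_refl _, hL0⟩, ?_⟩
      rw [hγ0]
      have := hshort _ _ _ hs2 p hp
      have t3 := dist_triangle (q h) p (q a)
      linarith
  choose! t ht htd using near
  have tdist : ∀ h ∈ H, a ≤ h → h ≤ b → |dist (q a) (q h) - t h| ≤ 2 * δ + 2 * D := by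
    intro h hH h1 h2
    have e1 := hγ 0 ⟨le_refl _, hL0⟩ (t h) (ht h hH h1 h2)
    rw [hγ0, zero_sub, abs_neg, abs_of_nonneg (ht h hH h1 h2).1] at e1
    have e2 := htd h hH h1 h2
    have t1 := dist_triangle (q a) (q h) (γ (t h))
    have t2 := dist_triangle_right (q a) (q h) (γ (t h))
    rw [abs_le]; constructor <;> linarith
  have coarse : ∀ h ∈ H, ∀ k ∈ H, a ≤ h → h ≤ k → k ≤ b → t h ≤ t k + (4 * δ + 10 * D) := by
    intro h hH k hk h1 h2 h3
    have e1 := abs_le.1 (tdist h hH h1 (h2.trans h3))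
    have e2 := abs_le.1 (tdist k hk (h1.trans h2) h3)
    obtain ⟨x', y', z', ⟨s, ⟨g, hg1, hg2, hg3, rfl⟩, ⟨u, hu, huy⟩⟩, hx, hy, hz⟩ :=
      hq a ha h hH k hk h1 h2
    have e3 := hg1 0 ⟨le_refl _, dist_nonneg⟩ u hu
    rw [hg2, huy, zero_sub, abs_neg, abs_of_nonneg hu.1] at e3
    have e4 := hu.2
    have t1 := dist_triangle4 (q a) x' y' (q h)
    have t2 := dist_triangle4 x' (q a) (q k) z'
    rw [dist_comm x' (q a)] at t2
    rw [dist_comm y' (q h)] at t1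
    linarith
  let A : ℝ → Set ℝ := fun h => t '' {k | k ∈ H ∧ a ≤ k ∧ k ≤ h}
  have hbdd : ∀ h ∈ H, h ≤ b → BddAbove (A h) := by
    rintro h hH h2
    refine ⟨L, ?_⟩
    rintro _ ⟨k, ⟨hk, k1, k2⟩, rfl⟩
    exact (ht k hk k1 (k2.trans h2)).2
  let M : ℝ → ℝ := fun h => sSup (A h)
  have M1 : ∀ h ∈ H, a ≤ h → h ≤ b → t h ≤ M h := fun h hH h1 h2 =>
    le_csSup (hbdd h hH h2) ⟨h, ⟨hH, h1, le_refl _⟩, rfl⟩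
  have Mne : ∀ h ∈ H, a ≤ h → (A h).Nonempty := fun h hH h1 =>
    ⟨t h, h, ⟨hH, h1, le_refl _⟩, rfl⟩
  have M2 : ∀ h ∈ H, a ≤ h → h ≤ b → M h ≤ t h + (4 * δ + 10 * D) := by
    intro h hH h1 h2
    refine csSup_le (Mne h hH h1) ?_
    rintro _ ⟨k, ⟨hk, k1, k2⟩, rfl⟩
    exact coarse k hk h hH k1 k2 h2
  have M3 : ∀ h ∈ H, a ≤ h → h ≤ b → M h ≤ L := by
    intro h hH h1 h2
    refine csSup_le (Mne h hH h1) ?_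
    rintro _ ⟨k, ⟨hk, k1, k2⟩, rfl⟩
    exact (ht k hk k1 (k2.trans h2)).2
  have M0 : ∀ h ∈ H, a ≤ h → h ≤ b → 0 ≤ M h := fun h hH h1 h2 =>
    (ht h hH h1 h2).1.trans (M1 h hH h1 h2)
  have hclamp : ∀ u, 0 ≤ u → u ≤ L → max 0 (min L u) = u := by
    intro u h1 h2
    rw [min_eq_right h2, max_eq_right h1]
  have hmem : ∀ u, max 0 (min L u) ∈ Set.Icc 0 L := fun u =>
    ⟨le_max_left _ _, max_le hL0 (min_le_left _ _)⟩
  refine ⟨fun s => γ (max 0 (min L (s + M h₀))), fun s => max 0 (min L (s + M h₀)) - M h₀,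
    fun h => M h - M h₀, ?_, ?_, ?_, ?_, ?_⟩
  · intro s u
    simp only
    rw [hγ _ (hmem _) _ (hmem _)]
    congr 1; ring
  · intro s u
    have := clamp_sub_le L (s + M h₀) (u + M h₀)
    simp only
    convert this using 2 <;> ring
  · simp only [zero_add]
    rw [hclamp _ (M0 h₀ hh₀ hah hhb) (M3 h₀ hh₀ hah hhb), sub_self]
  · simp
  · intro h hH h1 h2
    simp only [sub_add_cancel]
    rw [hclamp _ (M0 h hH h1 h2) (M3 h hH h1 h2)]
    refine ⟨rfl, ?_, ?_⟩
    · have e1 := hγ (t h) (ht h hH h1 h2) (M h) ⟨M0 h hH h1 h2, M3 h hH h1 h2⟩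
      rw [abs_sub_comm, abs_of_nonneg (by linarith [M1 h hH h1 h2])] at e1
      have e2 := M2 h hH h1 h2
      have e3 := htd h hH h1 h2
      have := dist_triangle (q h) (γ (t h)) (γ (M h))
      linarith
    · intro k hk h3 h4
      have : M h ≤ M k := by
        refine csSup_le_csSup (hbdd k hk h4) (Mne h hH h1) ?_
        rintro _ ⟨j, ⟨hj, j1, j2⟩, rfl⟩
        exact ⟨j, ⟨hj, j1, j2.trans h3⟩, rfl⟩
      linarith

/-- For every `δ ≥ 0` and `D ≥ 0` there is `D' = D'(δ, D)`: any `D`-straight holey line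
`q : H → Y` in a proper geodesic `δ`-hyperbolic space `Y` is, up to error `D'`, a monotonic
map into a geodesic: there are an interval `I ⊆ ℝ`, an isometric embedding `c : I → Y`, and
a nondecreasing map `m : H → I` with `dist (q h) (c (m h)) ≤ D'` for all `h ∈ H`. -/
theorem straight_holey_line_near_geodesic :
    ∀ δ D : ℝ, 0 ≤ δ → 0 ≤ D → ∃ D' : ℝ,
      ∀ (Y : Type*) [MetricSpace Y], ∀ (_ : ProperSpace Y),
        IsGeodesicSpace Y → IsDeltaHyperbolic Y δ →
        ∀ (H : Set ℝ) (q : ℝ → Y), IsStraightHoleyLine D H q →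
          ∃ (I : Set ℝ) (c : ℝ → Y) (m : ℝ → ℝ),
            I.OrdConnected ∧
            (∀ t₁ ∈ I, ∀ t₂ ∈ I, dist (c t₁) (c t₂) = |t₁ - t₂|) ∧
            Set.MapsTo m H I ∧ MonotoneOn m H ∧
            ∀ h ∈ H, dist (q h) (c (m h)) ≤ D' := by
  intro δ D hδ hD
  refine ⟨6 * δ + 12 * D, ?_⟩
  intro Y _ _ hg hh H q hq
  rcases H.eq_empty_or_nonempty with rfl | ⟨h₀, hh₀⟩
  · exact ⟨∅, fun _ => q 0, fun _ => 0, Set.ordConnected_empty, fun _ h => h.elim,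
      fun _ h => h.elim, fun _ h => h.elim, fun _ h => h.elim⟩
  let P := {x : ℝ // x ∈ H ∧ x ≤ h₀}
  let Q := {x : ℝ // x ∈ H ∧ h₀ ≤ x}
  have : Nonempty P := ⟨⟨h₀, hh₀, le_refl _⟩⟩
  have : Nonempty Q := ⟨⟨h₀, hh₀, le_refl _⟩⟩
  have key : ∀ p : P × Q, _ := fun p =>
    straight_bounded hδ hD hg hh H q hq p.1.1 p.2.1 h₀ p.1.2.1 p.2.2.1 hh₀ p.1.2.2 p.2.2.2
  choose c e m hc he he0 hm0 hrest using key
  let U : Ultrafilter (P × Q) := Ultrafilter.of (Filter.atBot ×ˢ Filter.atTop)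
  have hU : (U : Filter (P × Q)) ≤ Filter.atBot ×ˢ Filter.atTop := Ultrafilter.of_le _
  have hev : ∀ h ∈ H, ∀ᶠ p in (U : Filter (P × Q)), p.1.1 ≤ h ∧ h ≤ p.2.1 := by
    intro h hH
    apply hU
    have h1 : ∀ᶠ p : P in Filter.atBot, p.1 ≤ h := by
      rcases le_total h h₀ with hle | hle
      · exact Filter.eventually_le_atBot (⟨h, hH, hle⟩ : P)
      · exact Filter.Eventually.of_forall fun p => p.2.2.trans hle
    have h2 : ∀ᶠ p : Q in Filter.atTop, h ≤ p.1 := by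
      rcases le_total h₀ h with hle | hle
      · exact Filter.eventually_ge_atTop (⟨h, hH, hle⟩ : Q)
      · exact Filter.Eventually.of_forall fun p => hle.trans p.2.2
    exact h1.prod_mk h2
  have base : ∀ p : P × Q, dist (q h₀) (c p 0) ≤ 6 * δ + 12 * D := by
    intro p
    have := (hrest p h₀ hh₀ p.1.2.2 p.2.2.2).2.1
    rwa [hm0] at this
  have limc : ∀ s : ℝ, ∃ y, Filter.Tendsto (fun p => c p s) (U : Filter (P × Q)) (nhds y) := by
    intro s
    refine ultralimit_exists U _ (q h₀) (|s| + (6 * δ + 12 * D)) (Filter.Eventually.of_forall ?_)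
    intro p
    have h1 := hc p s 0
    have h2 := he p s 0
    rw [sub_zero] at h2
    have h3 := dist_triangle_right (c p s) (q h₀) (c p 0)
    linarith [base p]
  have lime : ∀ s : ℝ, ∃ y, Filter.Tendsto (fun p => e p s) (U : Filter (P × Q)) (nhds y) := by
    intro s
    refine ultralimit_exists U _ 0 |s| (Filter.Eventually.of_forall ?_)
    intro p
    have h2 := he p s 0
    rw [he0 p, sub_zero, sub_zero] at h2
    simpa using h2
  have limm : ∀ h ∈ H, ∃ y, Filter.Tendsto (fun p => m p h) (U : Filter (P × Q)) (nhds y) := by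
    intro h hH
    refine ultralimit_exists U _ 0 (dist (q h) (q h₀) + 2 * (6 * δ + 12 * D)) ?_
    filter_upwards [hev h hH] with p hp
    obtain ⟨h1, h2, -⟩ := hrest p h hH hp.1 hp.2
    have h3 := hc p (m p h) 0
    rw [h1, he0, sub_zero] at h3
    rw [Real.dist_eq, sub_zero, ← h3]
    have h4 := dist_triangle4 (c p (m p h)) (q h) (q h₀) (c p 0)
    rw [dist_comm _ (q h)] at h4
    linarith [base p]
  choose C hC using limc
  choose E hE using lime
  choose! N hN using limm
  have hCd : ∀ s t, dist (C s) (C t) = |E s - E t| := by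
    intro s t
    refine tendsto_nhds_unique ((hC s).dist (hC t)) ?_
    simp only [hc]
    exact ((hE s).sub (hE t)).abs
  have hEd : ∀ s t, |E s - E t| ≤ |s - t| := fun s t =>
    le_of_tendsto ((hE s).sub (hE t)).abs (Filter.Eventually.of_forall fun p => he p s t)
  refine ⟨{t | E t = t}, C, N, ⟨?_⟩, ?_, ?_, ?_, ?_⟩
  · intro s hs t ht x hx
    simp only [Set.mem_ofPred_eq] at hs ht ⊢
    have h1 := (abs_le.1 (hEd x s)).2
    have h2 := (abs_le.1 (hEd t x)).2
    have h1' := (le_abs_self _).trans (hEd x s)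
    have h2' := (le_abs_self _).trans (hEd t x)
    rw [abs_of_nonneg (sub_nonneg.2 hx.1)] at h1'
    rw [abs_of_nonneg (sub_nonneg.2 hx.2)] at h2'
    linarith
  · intro s hs t ht
    simp only [Set.mem_ofPred_eq] at hs ht
    rw [hCd, hs, ht]
  · intro h hH
    have h1 : Filter.Tendsto (fun p => |e p (N h) - m p h|) (U : Filter (P × Q))
        (nhds |E (N h) - N h|) := ((hE (N h)).sub (hN h hH)).abs
    have h2 : Filter.Tendsto (fun p => |N h - m p h|) (U : Filter (P × Q))
        (nhds |N h - N h|) := (tendsto_const_nhds.sub (hN h hH)).abs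
    have h3 : |E (N h) - N h| ≤ |N h - N h| := by
      refine le_of_tendsto_of_tendsto h1 h2 ?_
      filter_upwards [hev h hH] with p hp
      have := he p (N h) (m p h)
      rwa [(hrest p h hH hp.1 hp.2).1] at this
    rw [sub_self, abs_zero] at h3
    exact sub_eq_zero.1 (abs_nonpos_iff.1 h3)
  · intro h hH k hk hhk
    refine le_of_tendsto_of_tendsto (hN h hH) (hN k hk) ?_
    filter_upwards [hev h hH, hev k hk] with p hp hp'
    exact (hrest p h hH hp.1 hp.2).2.2 k hk hhk hp'.2
  · intro h hH
    have h1 : Filter.Tendsto (fun p => dist (q h) (C (N h))) (U : Filter (P × Q))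
        (nhds (dist (q h) (C (N h)))) := tendsto_const_nhds
    have h2 : Filter.Tendsto (fun p => (6 * δ + 12 * D) + |m p h - N h| +
        dist (c p (N h)) (C (N h))) (U : Filter (P × Q))
        (nhds ((6 * δ + 12 * D) + |N h - N h| + dist (C (N h)) (C (N h)))) :=
      (tendsto_const_nhds.add ((hN h hH).sub tendsto_const_nhds).abs).add
        ((hC (N h)).dist tendsto_const_nhds)
    have h3 : dist (q h) (C (N h)) ≤
        (6 * δ + 12 * D) + |N h - N h| + dist (C (N h)) (C (N h)) := by
      refine le_of_tendsto_of_tendsto h1 h2 ?_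
      filter_upwards [hev h hH] with p hp
      have a1 := (hrest p h hH hp.1 hp.2).2.1
      have a2 := he p (m p h) (N h)
      rw [← hc] at a2
      have a3 := dist_triangle4 (q h) (c p (m p h)) (c p (N h)) (C (N h))
      linarith
    simpa using h3
end
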